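/- Define the curve σ_{a,h} ⊂ ℝ² (for a > 0, h ≥ 0) as follows: let x₀ = (0, h/2) and y₀ = (2a, −h/2); let σ_{a,h} be the union of (i) the half-circles {p : |p − x₀| = (1+2i)a, p₂ ≥ h/2} for i = 0,1,2,…, (ii) the half-circles {p : |p − y₀| = (1+2i)a, p₂ ≤ −h/2} for i = 0,1,2,…, and (iii) the vertical segments joining the endpoints of corresponding half-circles, namely the segments {(x₀₁ ± (1+2i)a)} × [−h/2, h/2] matched so that the union is connected. Then σ_{a,h} is a closed subset of ℝ² which is a connected C¹ one-dimensional submanifold of ℝ² (with locally Lipschitz unit tangent, i.e., of class C^{1,1}). -/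

import Mathlib

open Real in
/-- The curve `σ_{a,h} ⊂ ℝ²`: two families of concentric half-circles of radii
`(1+2i)a` around `x₀ = (0, h/2)` (in the upper half-plane `{p₂ ≥ h/2}`) and
around `y₀ = (2a, -h/2)` (in the lower half-plane `{p₂ ≤ -h/2}`),
joined by the vertical segments `{(2j+1)a} × [-h/2, h/2]`. -/
def sigmaCurve (a h : ℝ) : Set (EuclideanSpace ℝ (Fin 2)) :=
  {p | (∃ i : ℕ, Real.sqrt ((p 0) ^ 2 + (p 1 - h / 2) ^ 2) = (1 + 2 * i) * a) ∧ h / 2 ≤ p 1} ∪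
  {p | (∃ i : ℕ, Real.sqrt ((p 0 - 2 * a) ^ 2 + (p 1 + h / 2) ^ 2) = (1 + 2 * i) * a) ∧
        p 1 ≤ -(h / 2)} ∪
  {p | (∃ j : ℤ, p 0 = (2 * j + 1) * a) ∧ p 1 ∈ Set.Icc (-(h / 2)) (h / 2)}

namespace SigmaAux

/-- Gluing continuous pieces along breakpoints indexed by the integers. -/
theorem glue {E : Type*} [TopologicalSpace E] (T : ℤ → ℝ) (hT : StrictMono T)
    (hex : ∀ t, ∃ m, T m ≤ t ∧ t < T (m + 1)) (f : ℤ → ℝ → E)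
    (hm : ∀ m, f m (T (m + 1)) = f (m + 1) (T (m + 1))) (hc : ∀ m, Continuous (f m)) :
    ∃ F : ℝ → E, Continuous F ∧ ∀ m t, T m ≤ t → t ≤ T (m + 1) → F t = f m t := by
  choose N hN1 hN2 using hex
  have huniq : ∀ m t, T m ≤ t → t < T (m + 1) → N t = m := by
    intro m t h1 h2
    have h3 : N t < m + 1 := hT.lt_iff_lt.1 (lt_of_le_of_lt (hN1 t) h2)
    have h4 : m < N t + 1 := hT.lt_iff_lt.1 (lt_of_le_of_lt h1 (hN2 t))
    omega
  have hF : ∀ m t, T m ≤ t → t ≤ T (m + 1) → f (N t) t = f m t := by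
    intro m t h1 h2
    rcases h2.lt_or_eq with h2 | h2
    · rw [huniq m t h1 h2]
    · have := huniq (m + 1) t h2.ge (by rw [h2]; exact hT (by omega))
      rw [this, h2, hm]
  refine ⟨fun t => f (N t) t, ?_, hF⟩
  rw [continuous_iff_continuousAt]
  intro t
  rw [continuousAt_iff_continuous_left_right]
  constructor
  · obtain ⟨m, h1, h2⟩ : ∃ m, T m < t ∧ t ≤ T (m + 1) := by
      rcases (hN1 t).lt_or_eq with h | h
      · exact ⟨N t, h, (hN2 t).le⟩
      · refine ⟨N t - 1, ?_, ?_⟩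
        · exact lt_of_lt_of_eq (hT (by omega)) h
        · simp [h]
    refine ((hc m).continuousAt.continuousWithinAt).congr_of_eventuallyEq ?_ (hF m t h1.le h2)
    filter_upwards [self_mem_nhdsWithin, mem_nhdsWithin_of_mem_nhds (Ioi_mem_nhds h1)] with s hs1 hs2
    exact hF m s (le_of_lt hs2) (le_trans hs1 h2)
  · refine ((hc (N t)).continuousAt.continuousWithinAt).congr_of_eventuallyEq ?_ rfl
    filter_upwards [self_mem_nhdsWithin, mem_nhdsWithin_of_mem_nhds (Iio_mem_nhds (hN2 t))]
      with s hs1 hs2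
    exact hF (N t) s (le_trans (hN1 t) hs1) (le_of_lt hs2)

/-- A continuous function with continuous right derivative is differentiable. -/
theorem hasDerivAt_of_right (f f' : ℝ → ℝ) (hf : Continuous f) (hf' : Continuous f')
    (h : ∀ t, HasDerivWithinAt f (f' t) (Set.Ici t) t) (t : ℝ) : HasDerivAt f (f' t) t := by
  have key : ∀ s ∈ Set.Icc (t - 1) (t + 1),
      f s = f (t - 1) + ∫ x in (t - 1)..s, f' x := by
    intro s hs
    have := intervalIntegral.integral_eq_sub_of_hasDeriv_right_of_le hs.1 hf.continuousOn
      (fun x _ => (h x).mono Set.Ioi_subset_Ici_self) (hf'.intervalIntegrable _ _)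
    rw [this]; ring
  have h2 : HasDerivAt (fun s => f (t - 1) + ∫ x in (t - 1)..s, f' x) (f' t) t :=
    (intervalIntegral.integral_hasDerivAt_right (hf'.intervalIntegrable _ _)
      (hf'.stronglyMeasurableAtFilter _ _) hf'.continuousAt).const_add _
  refine h2.congr_of_eventuallyEq ?_
  filter_upwards [Icc_mem_nhds (show t - 1 < t by linarith) (show t < t + 1 by linarith)] with s hs
  exact key s hs

theorem lip_of_right (f f' : ℝ → ℝ) (C : ℝ) (hf : Continuous f)
    (h : ∀ t, HasDerivWithinAt f (f' t) (Set.Ici t) t) (hb : ∀ t, |f' t| ≤ C) (s t : ℝ) :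
    |f s - f t| ≤ C * |s - t| := by
  have key : ∀ s t, s ≤ t → |f t - f s| ≤ C * (t - s) := by
    intro s t hst
    have := norm_image_sub_le_of_norm_deriv_right_le_segment (f := f) (f' := f') (C := C)
      (a := s) (b := t) hf.continuousOn (fun x _ => h x) (fun x _ => hb x) t ⟨hst, le_rfl⟩
    simpa using this
  rcases le_total s t with hst | hst
  · rw [abs_sub_comm, abs_sub_comm s t, abs_of_nonneg (sub_nonneg.2 hst)]; exact key s t hst
  · rw [abs_of_nonneg (sub_nonneg.2 hst)]; exact key t s hst

noncomputable section

def eps (m : ℤ) : ℝ := if Even m then 1 else -1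

theorem eps_succ (m : ℤ) : eps (m + 1) = - eps m := by
  unfold eps
  by_cases h : Even m <;> simp [h]

theorem eps_cases (m : ℤ) : eps m = 1 ∨ eps m = -1 := by
  unfold eps; split_ifs <;> simp

def TT (a h : ℝ) (m : ℤ) : ℝ := -(h / 2) + m * h + Real.pi * a * (m * |(m : ℝ)|)

def R (a : ℝ) (m : ℤ) : ℝ := (2 * m + 1) * a

theorem TT_succ (a h : ℝ) (ha : 0 < a) (m : ℤ) :
    TT a h (m + 1) = TT a h m + h + Real.pi * |R a m| := by
  unfold TT R
  rw [abs_mul, abs_of_pos ha]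
  push_cast
  rcases le_or_gt 0 m with hm | hm
  · have : (0 : ℝ) ≤ m := by exact_mod_cast hm
    rw [abs_of_nonneg this, abs_of_nonneg (by linarith : (0 : ℝ) ≤ m + 1),
      abs_of_nonneg (by linarith : (0 : ℝ) ≤ 2 * m + 1)]
    ring
  · have : (m : ℝ) ≤ -1 := by exact_mod_cast (by omega : m ≤ -1)
    rw [abs_of_nonpos (by linarith : (m : ℝ) ≤ 0), abs_of_nonpos (by linarith : (m : ℝ) + 1 ≤ 0),
      abs_of_nonpos (by linarith : 2 * (m : ℝ) + 1 ≤ 0)]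
    ring

theorem R_ge (a : ℝ) (ha : 0 < a) (m : ℤ) : a ≤ |R a m| := by
  unfold R
  rw [abs_mul, abs_of_pos ha]
  have : (1 : ℝ) ≤ |2 * (m : ℝ) + 1| := by
    have : (1 : ℤ) ≤ |2 * m + 1| := Int.one_le_abs (by omega)
    exact_mod_cast this
  nlinarith

theorem TT_strictMono (a h : ℝ) (ha : 0 < a) (hh : 0 ≤ h) : StrictMono (TT a h) := by
  apply strictMono_int_of_lt_succ
  intro m
  rw [TT_succ a h ha]
  have := R_ge a ha m
  have := mul_pos Real.pi_pos (lt_of_lt_of_le ha this)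
  linarith

theorem TT_exists (a h : ℝ) (ha : 0 < a) (hh : 0 ≤ h) (t : ℝ) :
    ∃ m, TT a h m ≤ t ∧ t < TT a h (m + 1) := by
  have hpa : 0 < Real.pi * a := mul_pos Real.pi_pos ha
  have hbig : ∃ b : ℤ, t < TT a h b := by
    obtain ⟨k, hk⟩ := exists_nat_gt ((t + h / 2) / (Real.pi * a))
    rw [div_lt_iff₀ hpa] at hk
    refine ⟨(k : ℤ) + 1, ?_⟩
    unfold TT
    push_cast
    have hk0 : (0 : ℝ) ≤ k := Nat.cast_nonneg k
    rw [abs_of_nonneg (by linarith)]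
    have : (0 : ℝ) ≤ (k + 1) * h := by positivity
    have h3 : (k : ℝ) ≤ (k + 1) * (k + 1) := by nlinarith
    nlinarith [mul_le_mul_of_nonneg_left h3 hpa.le]
  have hsmall : ∃ b : ℤ, TT a h b ≤ t := by
    obtain ⟨k, hk⟩ := exists_nat_gt ((-t - h / 2) / (Real.pi * a))
    rw [div_lt_iff₀ hpa] at hk
    refine ⟨-((k : ℤ) + 1), ?_⟩
    unfold TT
    push_cast
    have hk0 : (0 : ℝ) ≤ k := Nat.cast_nonneg k
    rw [abs_of_nonpos (by linarith)]
    have : (0 : ℝ) ≤ (k + 1) * h := by positivity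
    have h3 : (k : ℝ) ≤ (k + 1) * (k + 1) := by nlinarith
    nlinarith [mul_le_mul_of_nonneg_left h3 hpa.le]
  obtain ⟨b, hb⟩ := hbig
  obtain ⟨m, hm1, hm2⟩ := Int.exists_greatest_of_bdd (P := fun m => TT a h m ≤ t)
    ⟨b, fun z hz => ((TT_strictMono a h ha hh).lt_iff_lt.1 (lt_of_le_of_lt hz hb)).le⟩ hsmall
  refine ⟨m, hm1, ?_⟩
  by_contra hcon
  have := hm2 (m + 1) (not_lt.1 hcon)
  omega

def ph (a h : ℝ) (m : ℤ) (t : ℝ) : ℝ := max ((t - TT a h m - h) / |R a m|) 0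

def X (a h : ℝ) (m : ℤ) (t : ℝ) : ℝ := a + eps m * (-a + R a m * Real.cos (ph a h m t))
def Y (a h : ℝ) (m : ℤ) (t : ℝ) : ℝ :=
  eps m * (min (t - TT a h m) h - h / 2 + |R a m| * Real.sin (ph a h m t))
def U (a h : ℝ) (m : ℤ) (t : ℝ) : ℝ := -(eps m * (R a m / |R a m|) * Real.sin (ph a h m t))
def V (a h : ℝ) (m : ℤ) (t : ℝ) : ℝ := eps m * Real.cos (ph a h m t)

theorem ph_end (a h : ℝ) (ha : 0 < a) (m : ℤ) : ph a h m (TT a h (m + 1)) = Real.pi := by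
  have := lt_of_lt_of_le ha (R_ge a ha m)
  unfold ph
  rw [TT_succ a h ha]
  have h2 : (TT a h m + h + Real.pi * |R a m| - TT a h m - h) / |R a m| = Real.pi := by
    field_simp; ring
  rw [h2, max_eq_left Real.pi_pos.le]

theorem ph_seg (a h : ℝ) (m : ℤ) (t : ℝ) (ht : t ≤ TT a h m + h) : ph a h m t = 0 := by
  unfold ph
  apply max_eq_right
  exact div_nonpos_of_nonpos_of_nonneg (by linarith) (abs_nonneg _)

theorem ph_arc (a h : ℝ) (m : ℤ) (t : ℝ) (ht : TT a h m + h ≤ t) :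
    ph a h m t = (t - TT a h m - h) / |R a m| := by
  unfold ph
  apply max_eq_left
  exact div_nonneg (by linarith) (abs_nonneg _)

theorem exists_curve (a h : ℝ) (ha : 0 < a) (hh : 0 ≤ h) :
    ∃ x y : ℝ → ℝ, Continuous x ∧ Continuous y ∧
      (∀ m t, TT a h m ≤ t → t ≤ TT a h (m + 1) → x t = X a h m t) ∧
      (∀ m t, TT a h m ≤ t → t ≤ TT a h (m + 1) → y t = Y a h m t) ∧
    ∃ u v : ℝ → ℝ, Continuous u ∧ Continuous v ∧
      (∀ m t, TT a h m ≤ t → t ≤ TT a h (m + 1) → u t = U a h m t) ∧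
      (∀ m t, TT a h m ≤ t → t ≤ TT a h (m + 1) → v t = V a h m t) := by
  have hmono := TT_strictMono a h ha hh
  have hex := TT_exists a h ha hh
  have hph : ∀ m, Continuous (ph a h m) := by
    intro m; unfold ph; fun_prop
  have h0 : ∀ m, ph a h m (TT a h m) = 0 := fun m => ph_seg a h m _ (by linarith)
  obtain ⟨x, hx1, hx2⟩ := glue (TT a h) hmono hex (X a h)
    (by intro m; simp only [X, ph_end a h ha, h0, eps_succ, R]; simp; ring)
    (by intro m; have := hph m; unfold X; fun_prop)
  obtain ⟨y, hy1, hy2⟩ := glue (TT a h) hmono hex (Y a h)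
    (by
      intro m; simp only [Y, ph_end a h ha, h0, eps_succ]
      have : h ≤ TT a h (m + 1) - TT a h m := by
        rw [TT_succ a h ha]
        have := mul_nonneg Real.pi_pos.le (abs_nonneg (R a m))
        linarith
      rw [min_eq_right this, sub_self, min_eq_left hh, Real.sin_pi, Real.sin_zero]; ring)
    (by intro m; have := hph m; unfold Y; fun_prop)
  obtain ⟨u, hu1, hu2⟩ := glue (TT a h) hmono hex (U a h)
    (by intro m; simp only [U, ph_end a h ha, h0]; simp)
    (by intro m; have := hph m; unfold U; fun_prop)
  obtain ⟨v, hv1, hv2⟩ := glue (TT a h) hmono hex (V a h)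
    (by intro m; simp only [V, ph_end a h ha, h0, eps_succ]; simp)
    (by intro m; have := hph m; unfold V; fun_prop)
  exact ⟨x, y, hx1, hy1, hx2, hy2, u, v, hu1, hv1, hu2, hv2⟩

theorem right_congr {f g : ℝ → ℝ} {d s t : ℝ} (hst : t < s) (he : ∀ r, t ≤ r → r < s → f r = g r)
    (hg : HasDerivAt g d t) : HasDerivWithinAt f d (Set.Ici t) t := by
  refine hg.hasDerivWithinAt.congr_of_eventuallyEq ?_ (he t le_rfl hst)
  filter_upwards [self_mem_nhdsWithin, mem_nhdsWithin_of_mem_nhds (Iio_mem_nhds hst)] with r h1 h2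
  exact he r h1 h2

theorem right_derivs (a h : ℝ) (ha : 0 < a) (hh : 0 ≤ h) (x y u v : ℝ → ℝ)
    (hx : ∀ m t, TT a h m ≤ t → t ≤ TT a h (m + 1) → x t = X a h m t)
    (hy : ∀ m t, TT a h m ≤ t → t ≤ TT a h (m + 1) → y t = Y a h m t)
    (hu : ∀ m t, TT a h m ≤ t → t ≤ TT a h (m + 1) → u t = U a h m t)
    (hv : ∀ m t, TT a h m ≤ t → t ≤ TT a h (m + 1) → v t = V a h m t) (t : ℝ) :
    HasDerivWithinAt x (u t) (Set.Ici t) t ∧ HasDerivWithinAt y (v t) (Set.Ici t) t ∧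
    (∃ d, |d| ≤ 1 / a ∧ HasDerivWithinAt u d (Set.Ici t) t) ∧
    (∃ d, |d| ≤ 1 / a ∧ HasDerivWithinAt v d (Set.Ici t) t) := by
  obtain ⟨m, h1, h2⟩ := TT_exists a h ha hh t
  have hR := R_ge a ha m
  have hR0 : 0 < |R a m| := lt_of_lt_of_le ha hR
  have he : |eps m| = 1 := by rcases eps_cases m with h | h <;> simp [h]
  rcases lt_or_ge t (TT a h m + h) with h3 | h3
  · have h4 : t < min (TT a h m + h) (TT a h (m + 1)) := lt_min h3 h2
    have hA : ∀ r, t ≤ r → r < min (TT a h m + h) (TT a h (m + 1)) →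
        TT a h m ≤ r ∧ r ≤ TT a h (m + 1) ∧ r ≤ TT a h m + h :=
      fun r hr1 hr2 => ⟨h1.trans hr1, (lt_min_iff.1 hr2).2.le, (lt_min_iff.1 hr2).1.le⟩
    have hut : ∀ r, t ≤ r → r < min (TT a h m + h) (TT a h (m + 1)) → u r = 0 := by
      intro r hr1 hr2
      obtain ⟨i1, i2, i3⟩ := hA r hr1 hr2
      rw [hu m r i1 i2, U, ph_seg a h m r i3]; simp
    have hvt : ∀ r, t ≤ r → r < min (TT a h m + h) (TT a h (m + 1)) → v r = eps m := by
      intro r hr1 hr2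
      obtain ⟨i1, i2, i3⟩ := hA r hr1 hr2
      rw [hv m r i1 i2, V, ph_seg a h m r i3]; simp
    refine ⟨?_, ?_, ⟨0, by simp [ha.le], ?_⟩, ⟨0, by simp [ha.le], ?_⟩⟩
    · rw [hut t le_rfl h4]
      refine right_congr (g := fun _ => a + eps m * (-a + R a m)) h4 ?_ (hasDerivAt_const _ _)
      intro r hr1 hr2
      obtain ⟨i1, i2, i3⟩ := hA r hr1 hr2
      rw [hx m r i1 i2, X, ph_seg a h m r i3]; simp
    · rw [hvt t le_rfl h4]
      refine right_congr (g := fun r => eps m * (r - TT a h m - h / 2)) h4 ?_ ?_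
      · intro r hr1 hr2
        obtain ⟨i1, i2, i3⟩ := hA r hr1 hr2
        rw [hy m r i1 i2, Y, ph_seg a h m r i3, min_eq_left (by linarith)]; simp
      · simpa using (((hasDerivAt_id t).sub_const (TT a h m)).sub_const (h / 2)).const_mul (eps m)
    · exact right_congr h4 hut (hasDerivAt_const _ _)
    · exact right_congr h4 hvt (hasDerivAt_const _ _)
  · have hA : ∀ r, t ≤ r → r < TT a h (m + 1) →
        TT a h m ≤ r ∧ r ≤ TT a h (m + 1) ∧ TT a h m + h ≤ r :=
      fun r hr1 hr2 => ⟨h1.trans hr1, hr2.le, h3.trans hr1⟩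
    set p : ℝ → ℝ := fun r => (r - TT a h m - h) / |R a m| with hp
    have hpd : HasDerivAt p (1 / |R a m|) t :=
      (((hasDerivAt_id t).sub_const (TT a h m)).sub_const h).div_const _
    have hut : ∀ r, t ≤ r → r < TT a h (m + 1) →
        u r = -(eps m * (R a m / |R a m|) * Real.sin (p r)) := by
      intro r hr1 hr2
      obtain ⟨i1, i2, i3⟩ := hA r hr1 hr2
      rw [hu m r i1 i2, U, ph_arc a h m r i3]
    have hvt : ∀ r, t ≤ r → r < TT a h (m + 1) → v r = eps m * Real.cos (p r) := by
      intro r hr1 hr2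
      obtain ⟨i1, i2, i3⟩ := hA r hr1 hr2
      rw [hv m r i1 i2, V, ph_arc a h m r i3]
    have hs := hpd.sin
    have hcs := hpd.cos
    refine ⟨?_, ?_, ⟨_, ?_, right_congr h2 hut (hs.const_mul _).neg⟩,
      ⟨_, ?_, right_congr h2 hvt (hcs.const_mul _)⟩⟩
    · rw [hut t le_rfl h2]
      refine right_congr (g := fun r => a + eps m * (-a + R a m * Real.cos (p r))) h2 ?_ ?_
      · intro r hr1 hr2
        obtain ⟨i1, i2, i3⟩ := hA r hr1 hr2
        rw [hx m r i1 i2, X, ph_arc a h m r i3]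
      · exact ((((hcs.const_mul (R a m)).const_add (-a)).const_mul (eps m)).const_add a).congr_deriv
          (by ring)
    · rw [hvt t le_rfl h2]
      refine right_congr (g := fun r => eps m * (h - h / 2 + |R a m| * Real.sin (p r))) h2 ?_ ?_
      · intro r hr1 hr2
        obtain ⟨i1, i2, i3⟩ := hA r hr1 hr2
        rw [hy m r i1 i2, Y, ph_arc a h m r i3, min_eq_right (by linarith)]
      · exact (((hs.const_mul (|R a m|)).const_add (h - h / 2)).const_mul (eps m)).congr_deriv
          (by field_simp)
    · have h5 : abs (R a m / |R a m|) = 1 := by rw [abs_div, abs_abs, div_self hR0.ne']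
      rw [abs_neg, abs_mul, abs_mul, abs_mul, he, h5, abs_of_pos (one_div_pos.2 hR0)]
      have := one_div_le_one_div_of_le ha hR
      nlinarith [Real.abs_cos_le_one (p t), one_div_pos.2 hR0]
    · rw [abs_mul, abs_mul, abs_neg, he, abs_of_pos (one_div_pos.2 hR0)]
      have := one_div_le_one_div_of_le ha hR
      nlinarith [Real.abs_sin_le_one (p t), one_div_pos.2 hR0]

/-- Every time lies on a closed segment or on an open arc. -/
theorem time_cases (a h : ℝ) (ha : 0 < a) (hh : 0 ≤ h) (t : ℝ) :
    (∃ m s, 0 ≤ s ∧ s ≤ h ∧ t = TT a h m + s) ∨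
    (∃ m φ, 0 < φ ∧ φ < Real.pi ∧ t = TT a h m + h + |R a m| * φ) := by
  obtain ⟨m, h1, h2⟩ := TT_exists a h ha hh t
  have hR0 : 0 < |R a m| := lt_of_lt_of_le ha (R_ge a ha m)
  rcases le_or_gt t (TT a h m + h) with h3 | h3
  · exact Or.inl ⟨m, t - TT a h m, by linarith, by linarith, by ring⟩
  · refine Or.inr ⟨m, (t - TT a h m - h) / |R a m|, div_pos (by linarith) hR0, ?_, ?_⟩
    · rw [div_lt_iff₀ hR0]
      rw [TT_succ a h ha] at h2; linarith
    · field_simp; ring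

theorem val_seg (a h : ℝ) (ha : 0 < a) (x y : ℝ → ℝ)
    (hx : ∀ m t, TT a h m ≤ t → t ≤ TT a h (m + 1) → x t = X a h m t)
    (hy : ∀ m t, TT a h m ≤ t → t ≤ TT a h (m + 1) → y t = Y a h m t)
    (m : ℤ) (s : ℝ) (h0 : 0 ≤ s) (h1 : s ≤ h) :
    x (TT a h m + s) = a + eps m * (2 * m * a) ∧ y (TT a h m + s) = eps m * (s - h / 2) := by
  have hR0 : 0 < Real.pi * |R a m| := mul_pos Real.pi_pos (lt_of_lt_of_le ha (R_ge a ha m))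
  have e := TT_succ a h ha m
  rw [hx m _ (by linarith) (by linarith), hy m _ (by linarith) (by linarith), X, Y,
    ph_seg a h m _ (by linarith), min_eq_left (by linarith)]
  simp only [Real.cos_zero, Real.sin_zero, R]
  constructor <;> ring

theorem val_arc (a h : ℝ) (ha : 0 < a) (hh : 0 ≤ h) (x y : ℝ → ℝ)
    (hx : ∀ m t, TT a h m ≤ t → t ≤ TT a h (m + 1) → x t = X a h m t)
    (hy : ∀ m t, TT a h m ≤ t → t ≤ TT a h (m + 1) → y t = Y a h m t)
    (m : ℤ) (φ : ℝ) (h0 : 0 ≤ φ) (h1 : φ ≤ Real.pi) :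
    x (TT a h m + h + |R a m| * φ) = a + eps m * (-a + R a m * Real.cos φ) ∧
    y (TT a h m + h + |R a m| * φ) = eps m * (h / 2 + |R a m| * Real.sin φ) := by
  have hR0 : 0 < |R a m| := lt_of_lt_of_le ha (R_ge a ha m)
  have e := TT_succ a h ha m
  have i1 : 0 ≤ |R a m| * φ := by positivity
  have i2 : |R a m| * φ ≤ Real.pi * |R a m| := by nlinarith
  have i3 : (TT a h m + h + |R a m| * φ - TT a h m - h) / |R a m| = φ := by
    field_simp; ring
  rw [hx m _ (by linarith) (by linarith), hy m _ (by linarith) (by linarith), X, Y,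
    ph_arc a h m _ (by linarith), i3, min_eq_right (by linarith)]
  constructor
  · rfl
  · ring


theorem R_abs_nat (a : ℝ) (ha : 0 < a) (m : ℤ) : ∃ i : ℕ, |R a m| = (1 + 2 * i) * a := by
  unfold R
  rw [abs_mul, abs_of_pos ha]
  rcases le_or_gt 0 m with hm | hm
  · lift m to ℕ using hm
    refine ⟨m, ?_⟩
    rw [abs_of_nonneg (by positivity)]
    push_cast; ring
  · obtain ⟨k, hk⟩ := Int.eq_ofNat_of_zero_le (by omega : 0 ≤ -m - 1)
    have hm2 : m = -(k : ℤ) - 1 := by omega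
    refine ⟨k, ?_⟩
    subst hm2
    have hk0 : (0 : ℝ) ≤ k := Nat.cast_nonneg k
    push_cast
    rw [abs_of_nonpos (by linarith)]
    ring

theorem exists_R (a : ℝ) (ha : 0 < a) (i : ℕ) (e : ℝ) (he : e = 1 ∨ e = -1) :
    ∃ m : ℤ, eps m = e ∧ |R a m| = (1 + 2 * i) * a := by
  have hi0 : (0 : ℝ) ≤ i := Nat.cast_nonneg i
  have h1 : |R a i| = (1 + 2 * i) * a := by
    unfold R
    rw [abs_mul, abs_of_pos ha, abs_of_nonneg (by push_cast; linarith)]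
    push_cast; ring
  have h2 : |R a (-(i : ℤ) - 1)| = (1 + 2 * i) * a := by
    unfold R
    rw [abs_mul, abs_of_pos ha, abs_of_nonpos (by push_cast; linarith)]
    push_cast; ring
  have h3 : eps (-(i : ℤ) - 1) = - eps i := by
    unfold eps
    by_cases h : Even (i : ℤ)
    · rw [if_pos h, if_neg]
      intro h'; obtain ⟨k, hk⟩ := h; obtain ⟨l, hl⟩ := h'; omega
    · rw [if_neg h, if_pos]
      · simp
      · rw [Int.not_even_iff_odd] at h
        obtain ⟨k, hk⟩ := h; exact ⟨-k - 1, by omega⟩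
  by_cases hc : eps i = e
  · exact ⟨i, hc, h1⟩
  · refine ⟨_, ?_, h2⟩
    rw [h3]
    rcases eps_cases i with h | h <;> rcases he with h' | h' <;> simp_all

theorem eps_neg (m : ℤ) : eps (-m) = eps m := by
  unfold eps; simp

theorem seg_index (m n : ℤ) (hmn : eps m * m = eps n * n) : m = n := by
  have key : m = n ∨ m = -n := by
    rcases eps_cases m with h | h <;> rcases eps_cases n with h' | h' <;> rw [h, h'] at hmn
    · left; have : (m : ℝ) = n := by linarith
      exact_mod_cast this
    · right; have : (m : ℝ) = -n := by linarith
      exact_mod_cast this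
    · right; have : (m : ℝ) = -n := by linarith
      exact_mod_cast this
    · left; have : (m : ℝ) = n := by linarith
      exact_mod_cast this
  rcases key with h | h
  · exact h
  · subst h
    rw [eps_neg] at hmn
    have hn : (n : ℝ) = 0 := by
      rcases eps_cases n with h' | h' <;> rw [h'] at hmn <;> push_cast at hmn <;> linarith
    have : n = 0 := by exact_mod_cast hn
    subst this; simp

theorem arc_index (a : ℝ) (ha : 0 < a) (m n : ℤ) (he : eps m = eps n)
    (hR : (R a m) ^ 2 = (R a n) ^ 2) : m = n := by
  rcases sq_eq_sq_iff_eq_or_eq_neg.1 hR with h | h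
  · unfold R at h
    have h2 := mul_right_cancel₀ ha.ne' h
    have : (m : ℝ) = n := by linarith
    exact_mod_cast this
  · exfalso
    unfold R at h
    have h2 : (2 * (m : ℝ) + 1) = -(2 * n + 1) := mul_right_cancel₀ ha.ne' (by linarith)
    have h3 : (m : ℝ) = -n - 1 := by linarith
    have h4 : m = -n - 1 := by exact_mod_cast h3
    have h5 : eps (m + 1) = eps n := by rw [h4, ← eps_neg n]; congr 1; ring
    rw [eps_succ, he] at h5
    rcases eps_cases n with h' | h' <;> rw [h'] at h5 <;> norm_num at h5

theorem seg_ne_arc {h s r c e e' : ℝ} (he : e = 1 ∨ e = -1) (he' : e' = 1 ∨ e' = -1)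
    (h0 : 0 ≤ s) (h1 : s ≤ h) (hr : 0 < r) (hc : 0 < c)
    (heq : e * (s - h / 2) = e' * (h / 2 + r * c)) : False := by
  have := mul_pos hr hc
  rcases he with rfl | rfl <;> rcases he' with rfl | rfl <;> linarith

theorem curve_inj (a h : ℝ) (ha : 0 < a) (hh : 0 ≤ h) (x y : ℝ → ℝ)
    (hx : ∀ m t, TT a h m ≤ t → t ≤ TT a h (m + 1) → x t = X a h m t)
    (hy : ∀ m t, TT a h m ≤ t → t ≤ TT a h (m + 1) → y t = Y a h m t)
    (t t' : ℝ) (h1 : x t = x t') (h2 : y t = y t') : t = t' := by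
  have hR0 : ∀ m, 0 < |R a m| := fun m => lt_of_lt_of_le ha (R_ge a ha m)
  rcases time_cases a h ha hh t with ⟨m, s, i1, i2, rfl⟩ | ⟨m, φ, i1, i2, rfl⟩ <;>
  rcases time_cases a h ha hh t' with ⟨n, s', j1, j2, rfl⟩ | ⟨n, φ', j1, j2, rfl⟩
  · obtain ⟨v1, v2⟩ := val_seg a h ha x y hx hy m s i1 i2
    obtain ⟨w1, w2⟩ := val_seg a h ha x y hx hy n s' j1 j2
    rw [v1, w1] at h1
    rw [v2, w2] at h2
    have : m = n := by
      apply seg_index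
      have h3 : (eps m * m) * (2 * a) = (eps n * n) * (2 * a) := by linarith
      exact mul_right_cancel₀ (by positivity) h3
    subst this
    rcases eps_cases m with h' | h' <;> rw [h'] at h2 <;> linarith
  · obtain ⟨v1, v2⟩ := val_seg a h ha x y hx hy m s i1 i2
    obtain ⟨w1, w2⟩ := val_arc a h ha hh x y hx hy n φ' j1.le j2.le
    rw [v2, w2] at h2
    exact (seg_ne_arc (eps_cases m) (eps_cases n) i1 i2 (hR0 n)
      (Real.sin_pos_of_pos_of_lt_pi j1 j2) h2).elim
  · obtain ⟨v1, v2⟩ := val_arc a h ha hh x y hx hy m φ i1.le i2.le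
    obtain ⟨w1, w2⟩ := val_seg a h ha x y hx hy n s' j1 j2
    rw [v2, w2] at h2
    exact (seg_ne_arc (eps_cases n) (eps_cases m) j1 j2 (hR0 m)
      (Real.sin_pos_of_pos_of_lt_pi i1 i2) h2.symm).elim
  · obtain ⟨v1, v2⟩ := val_arc a h ha hh x y hx hy m φ i1.le i2.le
    obtain ⟨w1, w2⟩ := val_arc a h ha hh x y hx hy n φ' j1.le j2.le
    rw [v1, w1] at h1
    rw [v2, w2] at h2
    have p1 := mul_pos (hR0 m) (Real.sin_pos_of_pos_of_lt_pi i1 i2)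
    have p2 := mul_pos (hR0 n) (Real.sin_pos_of_pos_of_lt_pi j1 j2)
    have he : eps m = eps n := by
      rcases eps_cases m with h | h <;> rcases eps_cases n with h' | h' <;> rw [h, h'] at h2 ⊢ <;>
        linarith
    rw [he] at h1 h2
    have hne : eps n ≠ 0 := by rcases eps_cases n with h | h <;> rw [h] <;> norm_num
    have q1 := mul_left_cancel₀ hne (add_left_cancel h1)
    have q2 := mul_left_cancel₀ hne h2
    have q1' : R a m * Real.cos φ = R a n * Real.cos φ' := by linarith
    have q2' : |R a m| * Real.sin φ = |R a n| * Real.sin φ' := by linarith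
    have hmn : m = n := by
      apply arc_index a ha m n he
      have e1 : (R a m) ^ 2 = (R a m * Real.cos φ) ^ 2 + (|R a m| * Real.sin φ) ^ 2 := by
        rw [mul_pow, mul_pow, sq_abs, ← mul_add, Real.cos_sq_add_sin_sq, mul_one]
      have e2 : (R a n) ^ 2 = (R a n * Real.cos φ') ^ 2 + (|R a n| * Real.sin φ') ^ 2 := by
        rw [mul_pow, mul_pow, sq_abs, ← mul_add, Real.cos_sq_add_sin_sq, mul_one]
      rw [e1, e2, q1', q2']
    subst hmn
    have hRne : R a m ≠ 0 := abs_pos.1 (hR0 m)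
    have := Real.injOn_cos ⟨i1.le, i2.le⟩ ⟨j1.le, j2.le⟩ (mul_left_cancel₀ hRne q1')
    rw [this]

theorem polar (r c d : ℝ) (hr : r ≠ 0) (hd : 0 ≤ d) (hcd : c ^ 2 + d ^ 2 = r ^ 2) :
    ∃ φ, 0 ≤ φ ∧ φ ≤ Real.pi ∧ r * Real.cos φ = c ∧ |r| * Real.sin φ = d := by
  have hr2 : 0 < r ^ 2 := by positivity
  have hsq : (c / r) ^ 2 ≤ 1 := by
    rw [div_pow, div_le_one hr2]; nlinarith
  have hb := abs_le.1 ((sq_le_one_iff_abs_le_one _).1 hsq)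
  refine ⟨Real.arccos (c / r), Real.arccos_nonneg _, Real.arccos_le_pi _, ?_, ?_⟩
  · rw [Real.cos_arccos hb.1 hb.2]; field_simp
  · rw [Real.sin_arccos]
    have : 1 - (c / r) ^ 2 = (d / |r|) ^ 2 := by
      rw [div_pow, div_pow, sq_abs]; field_simp; linarith
    rw [this, Real.sqrt_sq (by positivity)]
    have := abs_pos.2 hr
    field_simp

theorem curve_mem (a h : ℝ) (ha : 0 < a) (hh : 0 ≤ h) (x y : ℝ → ℝ)
    (hx : ∀ m t, TT a h m ≤ t → t ≤ TT a h (m + 1) → x t = X a h m t)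
    (hy : ∀ m t, TT a h m ≤ t → t ≤ TT a h (m + 1) → y t = Y a h m t)
    (p : EuclideanSpace ℝ (Fin 2)) :
    p ∈ sigmaCurve a h ↔ ∃ t, x t = p 0 ∧ y t = p 1 := by
  have hR0 : ∀ m, 0 < |R a m| := fun m => lt_of_lt_of_le ha (R_ge a ha m)
  have hRsq : ∀ m φ, (R a m * Real.cos φ) ^ 2 + (|R a m| * Real.sin φ) ^ 2 = |R a m| ^ 2 := by
    intro m φ
    rw [mul_pow, mul_pow, sq_abs, ← mul_add, Real.cos_sq_add_sin_sq, mul_one]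
  constructor
  · rintro ((⟨⟨i, hi⟩, hp⟩ | ⟨⟨i, hi⟩, hp⟩) | ⟨⟨j, hj⟩, hp⟩)
    · obtain ⟨m, he, hR⟩ := exists_R a ha i 1 (Or.inl rfl)
      rw [← hR] at hi
      rw [Real.sqrt_eq_iff_eq_sq (by positivity) (abs_nonneg _), sq_abs] at hi
      obtain ⟨φ, f1, f2, f3, f4⟩ := polar (R a m) (p 0) (p 1 - h / 2) (abs_pos.1 (hR0 m))
        (by linarith) hi
      obtain ⟨w1, w2⟩ := val_arc a h ha hh x y hx hy m φ f1 f2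
      refine ⟨_, w1.trans ?_, w2.trans ?_⟩
      · rw [he, f3]; ring
      · rw [he, f4]; ring
    · obtain ⟨m, he, hR⟩ := exists_R a ha i (-1) (Or.inr rfl)
      rw [← hR] at hi
      rw [Real.sqrt_eq_iff_eq_sq (by positivity) (abs_nonneg _), sq_abs] at hi
      obtain ⟨φ, f1, f2, f3, f4⟩ := polar (R a m) (2 * a - p 0) (-(h / 2) - p 1)
        (abs_pos.1 (hR0 m)) (by linarith) (by rw [← hi]; ring)
      obtain ⟨w1, w2⟩ := val_arc a h ha hh x y hx hy m φ f1 f2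
      refine ⟨_, w1.trans ?_, w2.trans ?_⟩
      · rw [he, f3]; ring
      · rw [he, f4]; ring
    · obtain ⟨hp1, hp2⟩ := hp
      rcases eps_cases j with he | he
      · obtain ⟨w1, w2⟩ := val_seg a h ha x y hx hy j (p 1 + h / 2) (by linarith) (by linarith)
        refine ⟨_, w1.trans ?_, w2.trans ?_⟩
        · rw [he, hj]; ring
        · rw [he]; ring
      · obtain ⟨w1, w2⟩ := val_seg a h ha x y hx hy (-j) (h / 2 - p 1) (by linarith) (by linarith)
        rw [eps_neg, he] at w1 w2
        refine ⟨_, w1.trans ?_, w2.trans ?_⟩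
        · rw [hj]; push_cast; ring
        · ring
  · rintro ⟨t, h0, h1⟩
    rcases time_cases a h ha hh t with ⟨m, s, i1, i2, rfl⟩ | ⟨m, φ, i1, i2, rfl⟩
    · right
      obtain ⟨w1, w2⟩ := val_seg a h ha x y hx hy m s i1 i2
      rw [h0] at w1
      rw [h1] at w2
      rcases eps_cases m with he | he <;> rw [he] at w1 w2
      · exact ⟨⟨m, by rw [w1]; ring⟩, by rw [w2]; linarith, by rw [w2]; linarith⟩
      · exact ⟨⟨-m, by rw [w1]; push_cast; ring⟩, by rw [w2]; linarith, by rw [w2]; linarith⟩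
    · left
      obtain ⟨w1, w2⟩ := val_arc a h ha hh x y hx hy m φ i1.le i2.le
      rw [h0] at w1
      rw [h1] at w2
      have p1 := mul_pos (hR0 m) (Real.sin_pos_of_pos_of_lt_pi i1 i2)
      obtain ⟨i, hi⟩ := R_abs_nat a ha m
      rcases eps_cases m with he | he <;> rw [he] at w1 w2
      · left
        refine ⟨⟨i, ?_⟩, by rw [w2]; linarith⟩
        rw [← hi, Real.sqrt_eq_iff_eq_sq (by positivity) (abs_nonneg _), ← hRsq m φ, w1, w2]
        ring
      · right
        refine ⟨⟨i, ?_⟩, by rw [w2]; linarith⟩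
        rw [← hi, Real.sqrt_eq_iff_eq_sq (by positivity) (abs_nonneg _), ← hRsq m φ, w1, w2]
        ring

theorem isClosed_sigma (a h : ℝ) (ha : 0 < a) : IsClosed (sigmaCurve a h) := by
  have hN : ∀ f : EuclideanSpace ℝ (Fin 2) → ℝ, Continuous f →
      IsClosed {p | ∃ i : ℕ, f p = (1 + 2 * i) * a} := by
    intro f hf
    have : {p | ∃ i : ℕ, f p = (1 + 2 * i) * a} =
        (fun p => (f p / a - 1) / 2) ⁻¹' Set.range (fun i : ℕ => (i : ℝ)) := by
      ext p
      simp only [Set.mem_ofPred_eq, Set.mem_preimage, Set.mem_range]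
      refine exists_congr fun i => ?_
      constructor
      · intro hi; rw [hi]; field_simp; ring
      · intro hi; rw [hi]; field_simp; ring
    rw [this]
    exact Nat.isClosedEmbedding_coe_real.isClosed_range.preimage (by fun_prop)
  have hZ : ∀ f : EuclideanSpace ℝ (Fin 2) → ℝ, Continuous f →
      IsClosed {p | ∃ j : ℤ, f p = (2 * j + 1) * a} := by
    intro f hf
    have : {p | ∃ j : ℤ, f p = (2 * j + 1) * a} =
        (fun p => (f p / a - 1) / 2) ⁻¹' Set.range (fun i : ℤ => (i : ℝ)) := by
      ext p
      simp only [Set.mem_ofPred_eq, Set.mem_preimage, Set.mem_range]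
      refine exists_congr fun i => ?_
      constructor
      · intro hi; rw [hi]; field_simp; ring
      · intro hi; rw [hi]; field_simp; ring
    rw [this]
    exact Int.isClosedEmbedding_coe_real.isClosed_range.preimage (by fun_prop)
  unfold sigmaCurve
  refine IsClosed.union (IsClosed.union ?_ ?_) ?_
  · have c1 : IsClosed {p : EuclideanSpace ℝ (Fin 2) | h / 2 ≤ p 1} :=
      isClosed_le (by fun_prop) (by fun_prop)
    exact (hN _ (by fun_prop)).inter c1
  · have c1 : IsClosed {p : EuclideanSpace ℝ (Fin 2) | p 1 ≤ -(h / 2)} :=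
      isClosed_le (by fun_prop) (by fun_prop)
    exact (hN _ (by fun_prop)).inter c1
  · exact (hZ _ (by fun_prop)).inter (isClosed_Icc.preimage (by fun_prop))

end

end SigmaAux

/-- `σ_{a,h}` is a closed, connected, `C^{1,1}` one-dimensional submanifold of the
plane: it admits an injective unit-speed `C¹` parametrization whose derivative is
Lipschitz. -/
theorem sigmaCurve_closed_connected_C11 (a h : ℝ) (ha : 0 < a) (hh : 0 ≤ h) :
    IsClosed (sigmaCurve a h) ∧ IsConnected (sigmaCurve a h) ∧
    ∃ γ : ℝ → EuclideanSpace ℝ (Fin 2),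
      Function.Injective γ ∧ Set.range γ = sigmaCurve a h ∧
      ContDiff ℝ 1 γ ∧ (∀ t : ℝ, ‖deriv γ t‖ = 1) ∧
      ∃ K : NNReal, LipschitzWith K (deriv γ) := by
  obtain ⟨x, y, cx, cy, hx, hy, u, v, cu, cv, hu, hv⟩ := SigmaAux.exists_curve a h ha hh
  have hd := SigmaAux.right_derivs a h ha hh x y u v hx hy hu hv
  have dx := SigmaAux.hasDerivAt_of_right x u cx cu (fun t => (hd t).1)
  have dy := SigmaAux.hasDerivAt_of_right y v cy cv (fun t => (hd t).2.1)
  choose du bndu deru using fun t => (hd t).2.2.1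
  choose dv bndv derv using fun t => (hd t).2.2.2
  have lu := SigmaAux.lip_of_right u du (1 / a) cu deru bndu
  have lv := SigmaAux.lip_of_right v dv (1 / a) cv derv bndv
  have huv : ∀ t, u t ^ 2 + v t ^ 2 = 1 := by
    intro t
    obtain ⟨m, h1, h2⟩ := SigmaAux.TT_exists a h ha hh t
    have hR0 : 0 < |SigmaAux.R a m| := lt_of_lt_of_le ha (SigmaAux.R_ge a ha m)
    have e1 : SigmaAux.eps m ^ 2 = 1 := by
      rcases SigmaAux.eps_cases m with h | h <;> rw [h] <;> norm_num
    have e2 : (SigmaAux.R a m / |SigmaAux.R a m|) ^ 2 = 1 := by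
      rw [div_pow, sq_abs, div_self (pow_ne_zero 2 (abs_pos.1 hR0))]
    rw [hu m t h1 h2.le, hv m t h1 h2.le, SigmaAux.U, SigmaAux.V, neg_sq, mul_pow, mul_pow,
      mul_pow, e1, e2]
    simp
  set e0 : EuclideanSpace ℝ (Fin 2) := !₂[1, 0] with he0
  set e1 : EuclideanSpace ℝ (Fin 2) := !₂[0, 1] with he1
  have n0 : ‖e0‖ = 1 := by simp [he0, EuclideanSpace.norm_eq]
  have n1 : ‖e1‖ = 1 := by simp [he1, EuclideanSpace.norm_eq]
  have c0 : ∀ r s : ℝ, (r • e0 + s • e1) 0 = r := by intro r s; simp [he0, he1]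
  have c1 : ∀ r s : ℝ, (r • e0 + s • e1) 1 = s := by intro r s; simp [he0, he1]
  have hder : ∀ t, HasDerivAt (fun t => x t • e0 + y t • e1) (u t • e0 + v t • e1) t :=
    fun t => ((dx t).smul_const e0).add ((dy t).smul_const e1)
  have hderiv : deriv (fun t => x t • e0 + y t • e1) = fun t => u t • e0 + v t • e1 :=
    funext fun t => (hder t).deriv
  have hrange : Set.range (fun t => x t • e0 + y t • e1) = sigmaCurve a h := by
    ext p
    rw [SigmaAux.curve_mem a h ha hh x y hx hy p]
    simp only [Set.mem_range]
    refine exists_congr fun t => ?_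
    constructor
    · rintro rfl
      exact ⟨(c0 _ _).symm, (c1 _ _).symm⟩
    · rintro ⟨h0, h1⟩
      ext i
      fin_cases i
      · exact (c0 _ _).trans h0
      · exact (c1 _ _).trans h1
  have hcont : Continuous (fun t => x t • e0 + y t • e1) := by fun_prop
  refine ⟨SigmaAux.isClosed_sigma a h ha, hrange ▸ isConnected_range hcont,
    fun t => x t • e0 + y t • e1, ?_, hrange, ?_, ?_, ?_⟩
  · intro t t' htt
    have h0 := congrArg (fun p : EuclideanSpace ℝ (Fin 2) => p 0) htt
    have h1 := congrArg (fun p : EuclideanSpace ℝ (Fin 2) => p 1) htt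
    simp only [c0, c1] at h0 h1
    exact SigmaAux.curve_inj a h ha hh x y hx hy t t' h0 h1
  · rw [contDiff_one_iff_deriv]
    refine ⟨fun t => (hder t).differentiableAt, ?_⟩
    rw [hderiv]; fun_prop
  · intro t
    rw [hderiv, EuclideanSpace.norm_eq, Fin.sum_univ_two]
    simp only [c0, c1, Real.norm_eq_abs, sq_abs, huv, Real.sqrt_one]
  · refine ⟨⟨2 / a, by positivity⟩, ?_⟩
    rw [hderiv]
    refine LipschitzWith.of_dist_le_mul fun s t => ?_
    rw [dist_eq_norm, Real.dist_eq]
    have e : u s • e0 + v s • e1 - (u t • e0 + v t • e1) = (u s - u t) • e0 + (v s - v t) • e1 := by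
      module
    rw [e]
    refine (norm_add_le _ _).trans ?_
    rw [norm_smul, norm_smul, n0, n1, Real.norm_eq_abs, Real.norm_eq_abs]
    have := lu s t
    have := lv s t
    change _ ≤ 2 / a * |s - t|
    have e3 : 2 / a * |s - t| = 1 / a * |s - t| + 1 / a * |s - t| := by ring
    rw [e3]; linarith
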